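/- Under the CFL-type condition Δt/h^α ≤ 1/(2 ε C_α (1 + 1/α − ζ(α−1))), the explicit Euler scheme for the absorbing condition satisfies the discrete maximum principle: if M ≥ 0 and 0 ≤ P^0_j ≤ M for all j ∈ ℤ (with P^0_j = 0 for |j| ≥ J), then for every n ≥ 0 and every j ∈ ℤ one has 0 ≤ P^n_j ≤ M. -/

import Mathlib

open scoped BigOperators

/-- The constant `C_α = α Γ((1+α)/2) / (2^{1-α} √π Γ(1-α/2))`. -/
noncomputable def Cconst (α : ℝ) : ℝ :=
  α * Real.Gamma ((1 + α) / 2) /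
    ((2 : ℝ) ^ (1 - α) * Real.sqrt Real.pi * Real.Gamma (1 - α / 2))

/-- The real value of the Riemann zeta function at a real argument. -/
noncomputable def zetaR (s : ℝ) : ℝ := (riemannZeta (s : ℂ)).re

/-- The double-primed sum `Σ''_{k=a, k≠0}^{b} g(k)`: the sum over integers `a ≤ k ≤ b`,
omitting `k = 0`, where the end terms `k = a` and `k = b` carry weight `1/2`. -/
noncomputable def dsum (a b : ℤ) (g : ℤ → ℝ) : ℝ :=
  ∑ k ∈ (Finset.Icc a b).erase 0, (if k = a ∨ k = b then (1 : ℝ) / 2 else 1) * g k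


/-!
Collecting the terms of the scheme node by node, `P^{n+1}_j` is a linear combination of the `P^n_k`.
With `c = Δt ε C_α h^{-α}`, the coefficient of `P^n_j` is `1 - c (S + B - 2 ζ(α-1))`, where `S` is
the double-primed sum of the `|k|^{-1-α}` and `B`, the contribution of the absorption term, is the
sum of the integrals of `x^{-1-α}` over `(J+j, ∞)` and `(J-j, ∞)`. Comparing the sum with the
integral gives `S + B ≤ 2 (1 + 1/α)`, so the CFL condition makes this coefficient nonnegative. The
others are nonnegative because `ζ < 0` on `(-2, 1)`: on `(0, 1)` one reads this off from
`ζ(s) = s / (s - 1) - s ∫₁^∞ {t} t^{-s-1} dt`, and on `(-2, 0)` from the functional equation. Hence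
a step of the scheme is monotone; it fixes `0` and does not increase the constant `M ≥ 0`.
-/

open MeasureTheory Set Asymptotics

section Zeta

lemma mellin_indicator_Ioi {E : Type*} [NormedAddCommGroup E] [NormedSpace ℂ E] (f : ℝ → E)
    {a : ℝ} (ha : 0 ≤ a) (s : ℂ) :
    mellin ((Ioi a).indicator f) s = ∫ t in Ioi a, (t : ℂ) ^ (s - 1) • f t := by
  simp only [mellin, ← indicator_smul_apply _ (fun t : ℝ ↦ (t : ℂ) ^ (s - 1))]
  rw [setIntegral_indicator measurableSet_Ioi, inter_eq_right.mpr (Ioi_subset_Ioi ha)]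

lemma differentiableAt_mellin_indicator_Ioi {E : Type*} [NormedAddCommGroup E] [NormedSpace ℂ E]
    [CompleteSpace E] {f : ℝ → E} {a C : ℝ} (ha : 0 < a) (hf : AEStronglyMeasurable f)
    (hC : ∀ t, ‖f t‖ ≤ C) {s : ℂ} (hs : s.re < 0) :
    DifferentiableAt ℂ (mellin ((Ioi a).indicator f)) s := by
  have bound (t : ℝ) : ‖(Ioi a).indicator f t‖ ≤ C := (norm_indicator_le_norm_self f t).trans (hC t)
  refine mellin_differentiableAt_of_isBigO_rpow (a := 0) (b := s.re - 1) ?_ ?_ hs ?_ (by linarith)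
  · refine LocallyIntegrable.locallyIntegrableOn ?_ _
    exact (locallyIntegrable_const C).mono (hf.indicator measurableSet_Ioi)
      (.of_forall fun t ↦ (bound t).trans (le_abs_self C))
  · exact .of_bound C (.of_forall fun t ↦ by simpa using bound t)
  · have vanishes : (Ioi a).indicator f =ᶠ[nhdsWithin 0 (Ioi 0)] 0 := by
      filter_upwards [mem_nhdsWithin_of_mem_nhds (Iio_mem_nhds ha)] with t ht
      exact indicator_of_notMem (notMem_Ioi.mpr ht.le) f
    exact vanishes.trans_isBigO (isBigO_zero _ _)

/-- The integral `∫₁^∞ {t} t^{-s-1} dt` of the fractional part, which expresses `ζ(s)` in the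
half-plane `0 < re s`. -/
noncomputable def zetaFractIntegral (s : ℂ) : ℂ :=
  ∫ t in Ioi (1 : ℝ), (t : ℂ) ^ (-s - 1) * ((Int.fract t : ℝ) : ℂ)

lemma norm_ofReal_fract_le_one (t : ℝ) : ‖((Int.fract t : ℝ) : ℂ)‖ ≤ 1 := by
  rw [Complex.norm_real, Real.norm_of_nonneg (Int.fract_nonneg t)]
  exact (Int.fract_lt_one t).le

lemma measurable_ofReal_fract : Measurable fun t : ℝ ↦ ((Int.fract t : ℝ) : ℂ) :=
  Complex.measurable_ofReal.comp measurable_fract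

lemma differentiableAt_zetaFractIntegral {s : ℂ} (hs : 0 < s.re) :
    DifferentiableAt ℂ zetaFractIntegral s := by
  have eq_mellin : zetaFractIntegral =
      mellin ((Ioi 1).indicator fun t ↦ ((Int.fract t : ℝ) : ℂ)) ∘ Neg.neg := by
    ext z
    simp only [Function.comp_apply, mellin_indicator_Ioi _ zero_le_one, zetaFractIntegral,
      smul_eq_mul]
  rw [eq_mellin]
  exact (differentiableAt_mellin_indicator_Ioi one_pos
    measurable_ofReal_fract.aestronglyMeasurable norm_ofReal_fract_le_one
    (by simpa using hs)).comp s differentiableAt_id.neg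

lemma zetaFractIntegral_ofReal (σ : ℝ) :
    zetaFractIntegral σ = ((∫ t in Ioi (1 : ℝ), t ^ (-σ - 1) * Int.fract t : ℝ) : ℂ) := by
  rw [← integral_complex_ofReal, zetaFractIntegral]
  refine setIntegral_congr_fun measurableSet_Ioi fun t (ht : 1 < t) ↦ ?_
  simp [Complex.ofReal_cpow (zero_le_one.trans ht.le)]

lemma integral_floor_mul_cpow {s : ℂ} (hs : 1 < s.re) :
    ∫ t in Ioi (1 : ℝ), (⌊t⌋₊ : ℂ) * (t : ℂ) ^ (-(s + 1)) =
      1 / (s - 1) - zetaFractIntegral s := by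
  have int_cpow : ∫ t in Ioi (1 : ℝ), (t : ℂ) ^ (-s) = 1 / (s - 1) := by
    rw [integral_Ioi_cpow_of_lt (by simpa using hs) one_pos, Complex.ofReal_one,
      Complex.one_cpow, neg_div, ← div_neg, neg_add, neg_neg, ← sub_eq_add_neg]
  have integrable_cpow : IntegrableOn (fun t : ℝ ↦ (t : ℂ) ^ (-s)) (Ioi 1) :=
    integrableOn_Ioi_cpow_of_lt (by simpa using hs) one_pos
  have re_lt : (-s - 1).re < -1 := by
    simp only [Complex.sub_re, Complex.neg_re, Complex.one_re]
    linarith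
  have integrable_fract :
      IntegrableOn (fun t : ℝ ↦ (t : ℂ) ^ (-s - 1) * ((Int.fract t : ℝ) : ℂ)) (Ioi 1) :=
    (integrableOn_Ioi_cpow_of_lt re_lt one_pos).mul_bdd (c := 1)
      measurable_ofReal_fract.aestronglyMeasurable (.of_forall norm_ofReal_fract_le_one)
  rw [← int_cpow, zetaFractIntegral, ← integral_sub integrable_cpow integrable_fract]
  refine setIntegral_congr_fun measurableSet_Ioi fun t (ht : 1 < t) ↦ ?_
  have t_pos : 0 < t := zero_lt_one.trans ht
  have t_ne_zero : (t : ℂ) ≠ 0 := mod_cast t_pos.ne'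
  have floor_eq : (⌊t⌋₊ : ℂ) = t - ((Int.fract t : ℝ) : ℂ) := by
    rw [← Complex.ofReal_sub, Int.self_sub_fract, ← natCast_floor_eq_intCast_floor t_pos.le,
      Complex.ofReal_natCast]
  have cpow_eq : (t : ℂ) ^ (-s) = t * (t : ℂ) ^ (-s - 1) := by
    rw [Complex.cpow_sub _ _ t_ne_zero, Complex.cpow_one, mul_div_cancel₀ _ t_ne_zero]
  simp only [floor_eq, cpow_eq, neg_add']
  ring

lemma riemannZeta₁_eq_of_one_lt_re {s : ℂ} (hs : 1 < s.re) :
    riemannZeta₁ s = s - s * (s - 1) * zetaFractIntegral s := by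
  have hs1 : s ≠ 1 := by rintro rfl; simp at hs
  have s_sub_one_ne_zero : s - 1 ≠ 0 := sub_ne_zero.2 hs1
  have abel : riemannZeta s = s * (1 / (s - 1) - zetaFractIntegral s) := by
    rw [← LSeries_one_eq_riemannZeta hs, LSeries_eq_mul_integral' 1 zero_le_one hs,
      ← integral_floor_mul_cpow hs]
    · simp
    · exact .of_bound 1 (.of_forall fun n ↦ by simp)
  rw [riemannZeta_eq_inv_sub_mul hs1, inv_mul_eq_iff_eq_mul₀ s_sub_one_ne_zero] at abel
  rw [abel]
  field_simp

lemma riemannZeta₁_eq_of_re_pos {s : ℂ} (hs : 0 < s.re) :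
    riemannZeta₁ s = s - s * (s - 1) * zetaFractIntegral s := by
  have isOpen_halfPlane (c : ℝ) : IsOpen {z : ℂ | c < z.re} :=
    isOpen_lt continuous_const Complex.continuous_re
  have differentiableOn_rhs :
      DifferentiableOn ℂ (fun z ↦ z - z * (z - 1) * zetaFractIntegral z) {z | 0 < z.re} := by
    intro z hz
    have := differentiableAt_zetaFractIntegral hz
    exact DifferentiableAt.differentiableWithinAt (by fun_prop)
  refine AnalyticOnNhd.eqOn_of_preconnected_of_eventuallyEq (z₀ := 2)
    (differentiable_riemannZeta₁.differentiableOn.analyticOnNhd (isOpen_halfPlane 0))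
    (differentiableOn_rhs.analyticOnNhd (isOpen_halfPlane 0))
    (convex_halfSpace_re_gt 0).isPreconnected (by simp) ?_ hs
  filter_upwards [(isOpen_halfPlane 1).mem_nhds (by simp : (1 : ℝ) < (2 : ℂ).re)] with z hz
  exact riemannZeta₁_eq_of_one_lt_re hz

lemma ofReal_zetaR (s : ℝ) : (zetaR s : ℂ) = riemannZeta s :=
  Complex.conj_eq_iff_re.mp (by rw [← riemannZeta_conj, Complex.conj_ofReal])

lemma zetaR_eq_integral_fract {σ : ℝ} (hσ : 0 < σ) (hσ1 : σ ≠ 1) :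
    zetaR σ = σ / (σ - 1) - σ * ∫ t in Ioi (1 : ℝ), t ^ (-σ - 1) * Int.fract t := by
  have σ_sub_one_ne_zero : (σ : ℂ) - 1 ≠ 0 := sub_ne_zero.2 (mod_cast hσ1)
  apply Complex.ofReal_injective
  rw [ofReal_zetaR, riemannZeta_eq_inv_sub_mul (mod_cast hσ1),
    riemannZeta₁_eq_of_re_pos (by simpa using hσ), zetaFractIntegral_ofReal]
  push_cast
  field_simp

lemma zetaR_one_sub {u : ℝ} (hu : ∀ n : ℕ, u ≠ -n) (hu1 : u ≠ 1) :
    zetaR (1 - u) =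
      2 * (2 * Real.pi) ^ (-u) * Real.Gamma u * Real.cos (Real.pi * u / 2) * zetaR u := by
  apply Complex.ofReal_injective
  push_cast [ofReal_zetaR, Complex.ofReal_cpow (by positivity : 0 ≤ 2 * Real.pi),
    ← Complex.Gamma_ofReal]
  exact riemannZeta_one_sub (fun n ↦ mod_cast hu n) (mod_cast hu1)

lemma zetaR_neg_of_pos_of_lt_one {σ : ℝ} (hσ : 0 < σ) (hσ1 : σ < 1) : zetaR σ < 0 := by
  have integral_fract_nonneg : 0 ≤ ∫ t in Ioi (1 : ℝ), t ^ (-σ - 1) * Int.fract t :=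
    setIntegral_nonneg measurableSet_Ioi fun t (ht : 1 < t) ↦
      mul_nonneg (Real.rpow_nonneg (zero_le_one.trans ht.le) _) (Int.fract_nonneg t)
  have := div_neg_of_pos_of_neg hσ (sub_neg.mpr hσ1)
  have := mul_nonneg hσ.le integral_fract_nonneg
  rw [zetaR_eq_integral_fract hσ hσ1.ne]
  linarith

lemma zetaR_neg_of_neg_two_lt_of_neg {σ : ℝ} (hσ : -2 < σ) (hσ0 : σ < 0) : zetaR σ < 0 := by
  obtain ⟨u, rfl⟩ : ∃ u, σ = 1 - u := ⟨1 - σ, by ring⟩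
  have u_gt_one : 1 < u := by linarith
  have cos_neg : Real.cos (Real.pi * u / 2) < 0 := by
    apply Real.cos_neg_of_pi_div_two_lt_of_lt <;> nlinarith [Real.pi_pos]
  have zeta_pos : 0 < zetaR u := riemannZeta_re_pos_of_one_lt u_gt_one
  rw [zetaR_one_sub (fun n ↦ by have := n.cast_nonneg (α := ℝ); linarith) u_gt_one.ne']
  exact mul_neg_of_neg_of_pos (mul_neg_of_pos_of_neg (by positivity) cos_neg) zeta_pos

lemma zetaR_neg {σ : ℝ} (hσ : -2 < σ) (hσ1 : σ < 1) : zetaR σ < 0 := by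
  rcases lt_trichotomy σ 0 with neg | rfl | pos
  · exact zetaR_neg_of_neg_two_lt_of_neg hσ neg
  · norm_num [zetaR, riemannZeta_zero]
  · exact zetaR_neg_of_pos_of_lt_one pos hσ1

end Zeta

section DoublePrimedSum

variable {a b : ℤ} {f g : ℤ → ℝ}

lemma dsum_mono (hfg : f ≤ g) : dsum a b f ≤ dsum a b g :=
  Finset.sum_le_sum fun k _ ↦ mul_le_mul_of_nonneg_left (hfg k) (by split_ifs <;> norm_num)

lemma dsum_sub (a b : ℤ) (f g : ℤ → ℝ) :
    dsum a b (fun k ↦ f k - g k) = dsum a b f - dsum a b g := by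
  simp only [dsum, mul_sub, Finset.sum_sub_distrib]

lemma dsum_const_mul (a b : ℤ) (c : ℝ) (g : ℤ → ℝ) :
    dsum a b (fun k ↦ c * g k) = c * dsum a b g := by
  simp only [dsum, Finset.mul_sum, mul_left_comm c]

lemma dsum_neg_natCast_le (hg : 0 ≤ g) (p q : ℕ) :
    dsum (-p) q g ≤ ∑ k ∈ Finset.Icc 1 p, g (-k) + ∑ k ∈ Finset.Icc 1 q, g k := by
  have drop_weights : dsum (-p) q g ≤ ∑ k ∈ (Finset.Icc (-p : ℤ) q).erase 0, g k :=
    Finset.sum_le_sum fun k _ ↦ mul_le_of_le_one_left (hg k) (by split_ifs <;> norm_num)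
  have split_signs : (Finset.Icc (-p : ℤ) q).erase 0 =
      (Finset.Icc 1 p).image (fun k : ℕ ↦ -(k : ℤ)) ∪
        (Finset.Icc 1 q).image (Nat.cast : ℕ → ℤ) := by
    ext k
    simp only [Finset.mem_erase, Finset.mem_Icc, Finset.mem_union, Finset.mem_image]
    constructor
    · intro hk
      rcases lt_or_gt_of_ne hk.1 with neg | pos
      · exact .inl ⟨k.natAbs, by omega, by omega⟩
      · exact .inr ⟨k.natAbs, by omega, by omega⟩
    · rintro (⟨n, hn, rfl⟩ | ⟨n, hn, rfl⟩) <;> omega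
  have disjoint_signs : Disjoint ((Finset.Icc 1 p).image fun k : ℕ ↦ -(k : ℤ))
      ((Finset.Icc 1 q).image (Nat.cast : ℕ → ℤ)) := by
    simp only [Finset.disjoint_left, Finset.mem_image, Finset.mem_Icc]
    rintro _ ⟨m, hm, rfl⟩ ⟨n, hn, hnm⟩
    omega
  have neg_cast_injective : Function.Injective fun k : ℕ ↦ -(k : ℤ) :=
    neg_injective.comp Nat.cast_injective
  rwa [split_signs, Finset.sum_union disjoint_signs, Finset.sum_image neg_cast_injective.injOn,
    Finset.sum_image Nat.cast_injective.injOn] at drop_weights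

end DoublePrimedSum

section JumpKernel

variable {α : ℝ}

lemma sum_Icc_rpow_neg_le (hα : -1 ≤ α) (hα0 : α ≠ 0) {m : ℕ} (hm : 1 ≤ m) :
    ∑ k ∈ Finset.Icc 1 m, (k : ℝ) ^ (-(1 + α)) ≤ 1 + (1 - (m : ℝ) ^ (-α)) / α := by
  have antitone : AntitoneOn (fun x : ℝ ↦ x ^ (-(1 + α))) (Icc (1 : ℕ) m) :=
    (Real.antitoneOn_rpow_Ioi_of_exponent_nonpos (by linarith)).mono fun x hx ↦
      zero_lt_one.trans_le (by simpa using hx.1)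
  have zero_notMem : (0 : ℝ) ∉ uIcc ((1 : ℕ) : ℝ) m :=
    notMem_uIcc_of_lt (by simp) (by exact_mod_cast hm)
  calc ∑ k ∈ Finset.Icc 1 m, (k : ℝ) ^ (-(1 + α))
      = 1 + ∑ k ∈ Finset.Ico 1 m, ((k + 1 : ℕ) : ℝ) ^ (-(1 + α)) := by
        rw [← Finset.Ico_add_one_right_eq_Icc, Finset.sum_eq_sum_Ico_succ_bot (by omega),
          Finset.sum_Ico_add' (fun k : ℕ ↦ (k : ℝ) ^ (-(1 + α))), Nat.cast_one, Real.one_rpow]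
    _ ≤ 1 + ∫ x in ((1 : ℕ) : ℝ)..m, x ^ (-(1 + α)) := by
        gcongr
        exact antitone.sum_le_integral_Ico hm
    _ = 1 + (1 - (m : ℝ) ^ (-α)) / α := by
        rw [integral_rpow (.inr ⟨by simpa using hα0, zero_notMem⟩), Nat.cast_one, Real.one_rpow,
          (by ring : -(1 + α) + 1 = -α), div_neg, ← neg_div, neg_sub]

/-- The weight `|k|^{-(1+α)}` of a jump by `k` grid cells, that is, the density of the symmetric
`α`-stable Lévy measure at `k`. -/
noncomputable def jumpWeight (α : ℝ) (k : ℤ) : ℝ := |(k : ℝ)| ^ (-(1 + α))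

lemma jumpWeight_nonneg (α : ℝ) (k : ℤ) : 0 ≤ jumpWeight α k :=
  Real.rpow_nonneg (abs_nonneg _) _

lemma dsum_jumpWeight_le (hα : 0 < α) {a b : ℤ} (ha : a < 0) (hb : 0 < b) :
    dsum a b (jumpWeight α) ≤
      2 * (1 + 1 / α) - ((-a : ℝ) ^ (-α) + (b : ℝ) ^ (-α)) / α := by
  obtain ⟨p, rfl⟩ := Int.exists_eq_neg_ofNat ha.le
  lift b to ℕ using hb.le
  have left_le := sum_Icc_rpow_neg_le (by linarith) hα.ne' (by omega : 1 ≤ p)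
  have right_le := sum_Icc_rpow_neg_le (by linarith) hα.ne' (by omega : 1 ≤ b)
  have split := dsum_neg_natCast_le (jumpWeight_nonneg α) p b
  simp only [jumpWeight, Int.cast_neg, Int.cast_natCast, abs_neg, Nat.abs_cast, neg_neg]
    at split ⊢
  calc _ ≤ _ := split
    _ ≤ _ := add_le_add left_le right_le
    _ = _ := by ring

end JumpKernel

section EulerScheme

variable {α ε h Δt : ℝ} {J j : ℤ}

lemma Cconst_pos (hα : 0 < α) (hα2 : α < 2) : 0 < Cconst α := by
  have Gamma_den_pos : 0 < Real.Gamma (1 - α / 2) := Real.Gamma_pos_of_pos (by linarith)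
  unfold Cconst
  positivity

/-- One step of the explicit Euler scheme: the value at the interior node `j` of the grid function
obtained from `u` after time `Δt`. -/
noncomputable def eulerStep (α ε h Δt : ℝ) (J : ℤ) (u : ℤ → ℝ) (j : ℤ) : ℝ :=
  u j
    - Δt * ε * Cconst α * zetaR (α - 1) * h ^ (-α) * (u (j - 1) - 2 * u j + u (j + 1))
    - Δt * ε * Cconst α / α * ((1 + (j : ℝ) * h) ^ (-α) + (1 - (j : ℝ) * h) ^ (-α)) * u j
    + Δt * ε * Cconst α * h *
        dsum (-J - j) (J - j) (fun k ↦ (u (j + k) - u j) / |(k : ℝ) * h| ^ (1 + α))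

/-- The dimensionless number `Δt ε C_α h^{-α}` which the CFL condition bounds. -/
noncomputable def courantNumber (α ε h Δt : ℝ) : ℝ := Δt * ε * Cconst α * h ^ (-α)

/-- The total rate, in units of `ε C_α h^{-α}`, at which jumps leave node `j`, whether to
land on the grid or to be absorbed outside it. -/
noncomputable def outflowRate (α : ℝ) (J j : ℤ) : ℝ :=
  dsum (-J - j) (J - j) (jumpWeight α) + ((J + j : ℝ) ^ (-α) + (J - j : ℝ) ^ (-α)) / α

lemma outflowRate_le (hα : 0 < α) (hj : |j| < J) : outflowRate α J j ≤ 2 * (1 + 1 / α) := by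
  obtain ⟨neg_lt, lt⟩ := abs_lt.mp hj
  have := dsum_jumpWeight_le hα (by omega : -J - j < 0) (by omega : 0 < J - j)
  push_cast [neg_sub, sub_neg_eq_add, add_comm (j : ℝ)] at this
  rw [outflowRate]
  linarith

lemma courantNumber_nonneg (hα : 0 < α) (hα2 : α < 2) (hε : 0 ≤ ε) (hh : 0 ≤ h) (hΔt : 0 ≤ Δt) :
    0 ≤ courantNumber α ε h Δt := by
  have := Cconst_pos hα hα2
  unfold courantNumber
  positivity

lemma courantNumber_mul_le_one_iff (hα : 0 < α) (hα2 : α < 2) (hε : 0 < ε) (hh : 0 ≤ h) :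
    courantNumber α ε h Δt * (2 * (1 + 1 / α - zetaR (α - 1))) ≤ 1 ↔
      Δt / h ^ α ≤ 1 / (2 * ε * Cconst α * (1 + 1 / α - zetaR (α - 1))) := by
  have C_pos := Cconst_pos hα hα2
  have zeta_neg : zetaR (α - 1) < 0 := zetaR_neg (by linarith) (by linarith)
  have factor_pos : 0 < 1 + 1 / α - zetaR (α - 1) := by
    have : 0 < 1 / α := by positivity
    linarith
  rw [le_div_iff₀ (by positivity), courantNumber, Real.rpow_neg hh, div_eq_mul_inv Δt]
  ring_nf

lemma dsum_differenceQuotient (hh : 0 ≤ h) (a b : ℤ) (v : ℤ → ℝ) (w : ℝ) :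
    dsum a b (fun k ↦ (v k - w) / |(k : ℝ) * h| ^ (1 + α)) =
      h ^ (-(1 + α)) *
        (dsum a b (fun k ↦ jumpWeight α k * v k) - w * dsum a b (jumpWeight α)) := by
  rw [← dsum_const_mul, ← dsum_sub, ← dsum_const_mul]
  congr 1 with k
  rw [jumpWeight, abs_mul, abs_of_nonneg hh, Real.mul_rpow (abs_nonneg _) hh,
    Real.rpow_neg (abs_nonneg _), Real.rpow_neg hh]
  field_simp

lemma one_add_mul_rpow {L d p : ℝ} (hh : 0 ≤ h) (hL : L * h = 1) (hd : 0 ≤ L + d) :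
    (1 + d * h) ^ p = h ^ p * (L + d) ^ p := by
  rw [← hL, ← add_mul, Real.mul_rpow hd hh, mul_comm]

lemma eulerStep_eq_linearCombination (hh : 0 < h) (hJh : (J : ℝ) * h = 1) (hj : |j| < J)
    (u : ℤ → ℝ) :
    eulerStep α ε h Δt J u j =
      (1 - courantNumber α ε h Δt * (outflowRate α J j - 2 * zetaR (α - 1))) * u j
        + courantNumber α ε h Δt * -zetaR (α - 1) * (u (j - 1) + u (j + 1))
        + courantNumber α ε h Δt *
            dsum (-J - j) (J - j) (fun k ↦ jumpWeight α k * u (j + k)) := by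
  obtain ⟨neg_lt, lt⟩ : -(J : ℝ) < j ∧ (j : ℝ) < J := mod_cast abs_lt.mp hj
  have left : (1 + (j : ℝ) * h) ^ (-α) = h ^ (-α) * (J + j : ℝ) ^ (-α) :=
    one_add_mul_rpow hh.le hJh (by linarith)
  have right : (1 - (j : ℝ) * h) ^ (-α) = h ^ (-α) * (J - j : ℝ) ^ (-α) := by
    rw [sub_eq_add_neg, ← neg_mul, one_add_mul_rpow hh.le hJh (by linarith), ← sub_eq_add_neg]
  have kernel_scaling : h * h ^ (-(1 + α)) = h ^ (-α) := by
    rw [(by ring : -α = 1 + -(1 + α)), Real.rpow_add hh, Real.rpow_one]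
  rw [eulerStep, left, right, dsum_differenceQuotient hh.le, courantNumber, outflowRate,
    ← kernel_scaling]
  ring

lemma eulerStep_mono (hα : 0 < α) (hα2 : α < 2) (hε : 0 ≤ ε) (hΔt : 0 ≤ Δt) (hh : 0 < h)
    (hJh : (J : ℝ) * h = 1) (hj : |j| < J)
    (hCFL : courantNumber α ε h Δt * (2 * (1 + 1 / α - zetaR (α - 1))) ≤ 1)
    {u v : ℤ → ℝ} (huv : u ≤ v) :
    eulerStep α ε h Δt J u j ≤ eulerStep α ε h Δt J v j := by
  have zeta_neg : zetaR (α - 1) < 0 := zetaR_neg (by linarith) (by linarith)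
  have courant_nonneg := courantNumber_nonneg hα hα2 hε hh.le hΔt
  have diagonal_nonneg :
      0 ≤ 1 - courantNumber α ε h Δt * (outflowRate α J j - 2 * zetaR (α - 1)) := by
    have := mul_le_mul_of_nonneg_left (outflowRate_le hα hj) courant_nonneg
    linarith
  have neighbour_nonneg : 0 ≤ courantNumber α ε h Δt * -zetaR (α - 1) :=
    mul_nonneg courant_nonneg (neg_nonneg.mpr zeta_neg.le)
  rw [eulerStep_eq_linearCombination hh hJh hj, eulerStep_eq_linearCombination hh hJh hj]
  gcongr
  · exact huv j
  · exact huv (j - 1)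
  · exact huv (j + 1)
  · exact dsum_mono fun k ↦ mul_le_mul_of_nonneg_left (huv (j + k)) (jumpWeight_nonneg α k)

lemma eulerStep_const (c : ℝ) :
    eulerStep α ε h Δt J (fun _ ↦ c) j =
      c - Δt * ε * Cconst α / α * ((1 + (j : ℝ) * h) ^ (-α) + (1 - (j : ℝ) * h) ^ (-α)) * c := by
  simp only [eulerStep, dsum, sub_self, zero_div, mul_zero, Finset.sum_const_zero]
  ring

lemma eulerStep_const_le {c : ℝ} (hα : 0 < α) (hα2 : α < 2) (hε : 0 ≤ ε) (hΔt : 0 ≤ Δt)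
    (hjh : |(j : ℝ) * h| ≤ 1) (hc : 0 ≤ c) :
    eulerStep α ε h Δt J (fun _ ↦ c) j ≤ c := by
  have C_pos := Cconst_pos hα hα2
  have left_nonneg : 0 ≤ 1 + (j : ℝ) * h := by linarith [(abs_le.mp hjh).1]
  have right_nonneg : 0 ≤ 1 - (j : ℝ) * h := by linarith [(abs_le.mp hjh).2]
  rw [eulerStep_const]
  exact sub_le_self c (by positivity)

lemma eulerStep_mem_Icc {M : ℝ} (hα : 0 < α) (hα2 : α < 2) (hε : 0 ≤ ε) (hΔt : 0 ≤ Δt)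
    (hh : 0 < h) (hJh : (J : ℝ) * h = 1) (hj : |j| < J)
    (hCFL : courantNumber α ε h Δt * (2 * (1 + 1 / α - zetaR (α - 1))) ≤ 1)
    {u : ℤ → ℝ} (hu : ∀ k, u k ∈ Icc 0 M) :
    eulerStep α ε h Δt J u j ∈ Icc 0 M := by
  have M_nonneg : 0 ≤ M := (hu 0).1.trans (hu 0).2
  have jh_le : |(j : ℝ) * h| ≤ 1 := by
    rw [abs_mul, abs_of_pos hh, ← hJh]
    gcongr
    exact_mod_cast hj.le
  have step_mono {v w : ℤ → ℝ} (hvw : v ≤ w) :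
      eulerStep α ε h Δt J v j ≤ eulerStep α ε h Δt J w j :=
    eulerStep_mono hα hα2 hε hΔt hh hJh hj hCFL hvw
  constructor
  · calc 0 = eulerStep α ε h Δt J (fun _ ↦ 0) j := by rw [eulerStep_const, mul_zero, sub_zero]
      _ ≤ eulerStep α ε h Δt J u j := step_mono fun k ↦ (hu k).1
  · calc eulerStep α ε h Δt J u j ≤ eulerStep α ε h Δt J (fun _ ↦ M) j :=
          step_mono fun k ↦ (hu k).2
      _ ≤ M := eulerStep_const_le hα hα2 hε hΔt jh_le M_nonneg

end EulerScheme

/-- Discrete maximum principle for the explicit Euler scheme with the absorbing condition. -/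
theorem stmt_0 (α ε h Δt M : ℝ) (J : ℤ)
    (hα : 0 < α) (hα2 : α < 2) (hε : 0 < ε) (hJ : 1 ≤ J)
    (hh : h = 1 / (J : ℝ)) (hΔt : 0 < Δt)
    (P : ℕ → ℤ → ℝ)
    (hbc : ∀ n : ℕ, ∀ j : ℤ, J ≤ |j| → P n j = 0)
    (hscheme : ∀ n : ℕ, ∀ j : ℤ, |j| < J →
      P (n + 1) j =
        P n j
          - Δt * ε * Cconst α * zetaR (α - 1) * h ^ (-α) *
              (P n (j - 1) - 2 * P n j + P n (j + 1))
          - Δt * ε * Cconst α / α *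
              ((1 + (j : ℝ) * h) ^ (-α) + (1 - (j : ℝ) * h) ^ (-α)) * P n j
          + Δt * ε * Cconst α * h *
              dsum (-J - j) (J - j)
                (fun k => (P n (j + k) - P n j) / |(k : ℝ) * h| ^ (1 + α)))
    (hCFL : Δt / h ^ α ≤ 1 / (2 * ε * Cconst α * (1 + 1 / α - zetaR (α - 1))))
    (hM : 0 ≤ M)
    (hinit : ∀ j : ℤ, 0 ≤ P 0 j ∧ P 0 j ≤ M) :
    ∀ n : ℕ, ∀ j : ℤ, 0 ≤ P n j ∧ P n j ≤ M := by
  have J_pos : (0 : ℝ) < J := mod_cast hJ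
  have h_pos : 0 < h := hh ▸ one_div_pos.mpr J_pos
  have J_mul_h : (J : ℝ) * h = 1 := hh ▸ mul_one_div_cancel J_pos.ne'
  have courant_le := (courantNumber_mul_le_one_iff hα hα2 hε h_pos.le).mpr hCFL
  intro n
  induction n with
  | zero => exact hinit
  | succ n ih =>
    intro j
    rcases lt_or_ge |j| J with interior | exterior
    · rw [hscheme n j interior]
      exact eulerStep_mem_Icc hα hα2 hε.le hΔt.le h_pos J_mul_h interior courant_le ih
    · rw [hbc (n + 1) j exterior]
      exact ⟨le_rfl, hM⟩
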